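/- Let q be a prime power with q ≡ 1 (mod 4), let a be a non-square in F_q, let C be the conic of PG(2,q) with equation Y² = XZ, and let L be the line with equation Z = aX (an external line of C). Let S be the set of exterior points of C lying on L and let Q = ⟨(1,0,−a)⟩. Then Q does not lie on L and S ∪ {Q} is an exterior set of C. -/

import Mathlib

/-!
`PG(2,F)`: points are the 1-dimensional subspaces of `F^3` (modelled as the
projectivization of `Fin 3 → F`), lines are the 2-dimensional subspaces.
-/

variable {F : Type*} [Field F]

/-- The points of `PG(2,F)`: 1-dimensional subspaces of `F^3`. -/
abbrev PGPoint (F : Type*) [Field F] := Projectivization F (Fin 3 → F)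

/-- A line of `PG(2,F)` is a 2-dimensional subspace of `F^3`. -/
def IsProjLine (F : Type*) [Field F] (L : Submodule F (Fin 3 → F)) : Prop :=
  Module.finrank F L = 2

/-- The set of projective points lying on the subspace `L`. -/
def pointsOn (L : Submodule F (Fin 3 → F)) : Set (PGPoint F) :=
  {P | P.submodule ≤ L}

/-- `S` is a set without tangents: no line of `PG(2,F)` meets `S` in exactly one point. -/
def NoTangents (S : Set (PGPoint F)) : Prop :=
  ∀ L : Submodule F (Fin 3 → F), IsProjLine F L →
    ¬ (∃! P : PGPoint F, P ∈ S ∩ pointsOn L)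

/-- The conic (zero set in `PG(2,F)`) of a quadratic form `Q` on `F^3`. -/
def conicSet (Q : QuadraticForm F (Fin 3 → F)) : Set (PGPoint F) :=
  {P | ∀ v ∈ P.submodule, Q v = 0}

/-- Nondegeneracy of a quadratic form (via its polar form). -/
def NondegQF (Q : QuadraticForm F (Fin 3 → F)) : Prop :=
  ∀ v : Fin 3 → F, (∀ w, QuadraticMap.polar Q v w = 0) → v = 0

/-- A tangent line of a point set `C`: a line meeting `C` in exactly one point. -/
def IsTangentLine (C : Set (PGPoint F)) (L : Submodule F (Fin 3 → F)) : Prop :=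
  IsProjLine F L ∧ ∃! P : PGPoint F, P ∈ C ∩ pointsOn L

/-- An external line of a point set `C`: a line meeting `C` in no point. -/
def IsExternalLine (C : Set (PGPoint F)) (L : Submodule F (Fin 3 → F)) : Prop :=
  IsProjLine F L ∧ C ∩ pointsOn L = ∅

/-- An exterior point of `C`: a point not on `C` lying on some tangent line of `C`. -/
def IsExteriorPoint (C : Set (PGPoint F)) (P : PGPoint F) : Prop :=
  P ∉ C ∧ ∃ L : Submodule F (Fin 3 → F), IsTangentLine C L ∧ P ∈ pointsOn L

/-- An interior point of `C`: a point neither on `C` nor exterior to `C`. -/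
def IsInteriorPoint (C : Set (PGPoint F)) (P : PGPoint F) : Prop :=
  P ∉ C ∧ ¬ IsExteriorPoint C P

/-- An exterior set of `C`: every line containing at least two of its points is
an external line of `C`. -/
def IsExteriorSet (C E : Set (PGPoint F)) : Prop :=
  ∀ L : Submodule F (Fin 3 → F), IsProjLine F L →
    (∃ P1 ∈ E ∩ pointsOn L, ∃ P2 ∈ E ∩ pointsOn L, P1 ≠ P2) → IsExternalLine C L

/-- The conic of `PG(2,F)` with equation `Y² = XZ`. -/
def conicYsqXZ (F : Type*) [Field F] : Set (PGPoint F) :=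
  {P | ∀ v ∈ P.submodule, (v 1) ^ 2 = v 0 * v 2}

/-- The line of `PG(2,F)` with equation `Z = aX`. -/
def lineZeqaX (a : F) : Submodule F (Fin 3 → F) :=
  LinearMap.ker ((LinearMap.proj 2 : (Fin 3 → F) →ₗ[F] F) -
    a • (LinearMap.proj 0 : (Fin 3 → F) →ₗ[F] F))

/-- The point `⟨(1, 0, -a)⟩` of `PG(2,F)`. -/
noncomputable def ptQ (F : Type*) [Field F] (a : F) : PGPoint F :=
  Projectivization.mk F ![1, 0, -a] (by intro hv; simpa using congrFun hv 0)

/-!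
Put `f = Y² - XZ`, so that `C` is the zero set of `f`. The tangent of `C` at a point `w` lies in the
polar line of `w`, on which `f` takes only square values, so `f` takes nonzero square values at
exterior points. The point `Q = ⟨(1, 0, -a)⟩` is the pole of `L` and `f(Q) = a`, so for an exterior
point `v` of `L` we have `f(cv + dQ) = c² f(v) + d² a`. This vanishes only for `c = d = 0`, since
`-a` is a non-square and `f(v)` is a nonzero square. Hence the lines joining `Q` to the exterior
points of `L` are external, and any other line through two of the given points is `L` itself.
-/

theorem isSquare_of_mul_sq_eq_sq {x c d : F} (hc : c ≠ 0) (h : x * c ^ 2 = d ^ 2) :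
    IsSquare x := by
  rw [eq_div_of_mul_eq (pow_ne_zero 2 hc) h]
  exact (IsSquare.sq d).div (IsSquare.sq c)

theorem not_isSquare_neg_of_isSquare_neg_one {a : F} (hneg : IsSquare (-1 : F))
    (ha : ¬ IsSquare a) : ¬ IsSquare (-a) :=
  fun h => ha (by simpa using hneg.mul h)

theorem two_ne_zero_of_odd_card [Fintype F] (hodd : Odd (Fintype.card F)) : (2 : F) ≠ 0 :=
  Ring.two_ne_zero fun hchar =>
    Nat.not_even_iff_odd.2 hodd (Nat.even_iff.2 (FiniteField.even_card_of_char_two hchar))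

section QuadraticForm

theorem map_smul_add_smul {R M : Type*} [CommRing R] [AddCommGroup M] [Module R M]
    (f : QuadraticForm R M) (c d : R) (v w : M) :
    f (c • v + d • w) = c ^ 2 * f v + d ^ 2 * f w + c * d * QuadraticMap.polar f v w := by
  rw [QuadraticMap.map_add f, QuadraticMap.map_smul, QuadraticMap.map_smul,
    QuadraticMap.polar_smul_left, QuadraticMap.polar_smul_right]
  simp only [smul_eq_mul]
  ring

theorem anisotropic_restrict_mono {R M : Type*} [CommRing R] [AddCommGroup M] [Module R M]
    {f : QuadraticForm R M} {U W : Submodule R M} (hUW : U ≤ W)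
    (hW : (f.restrict W).Anisotropic) : (f.restrict U).Anisotropic :=
  fun u hu => Subtype.ext (congrArg W.subtype (hW ⟨u, hUW u.2⟩ hu))

variable {V : Type*} [AddCommGroup V] [Module F V] {f : QuadraticForm F V} {v w : V}

theorem exists_map_add_smul_eq_zero (hw : f w = 0) (hpolar : QuadraticMap.polar f v w ≠ 0) :
    ∃ t : F, f (v + t • w) = 0 := by
  refine ⟨-f v / QuadraticMap.polar f v w, ?_⟩
  have h := map_smul_add_smul f 1 (-f v / QuadraticMap.polar f v w) v w
  rw [one_smul] at h
  rw [h, hw]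
  field_simp
  ring

theorem anisotropic_restrict_span_pair (hpolar : QuadraticMap.polar f v w = 0) (hv : f v ≠ 0)
    (hv_sq : IsSquare (f v)) (hw_neg : ¬ IsSquare (-f w)) :
    (f.restrict (Submodule.span F {v, w})).Anisotropic := by
  rintro ⟨u, hu⟩ hfu
  obtain ⟨c, d, rfl⟩ := Submodule.mem_span_pair.1 hu
  obtain ⟨s, hs⟩ := hv_sq
  have hsum : c ^ 2 * f v + d ^ 2 * f w = 0 := by
    simpa [hpolar] using (map_smul_add_smul f c d v w).symm.trans hfu
  have hd : d = 0 := by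
    by_contra hd
    exact hw_neg (isSquare_of_mul_sq_eq_sq (d := c * s) hd (by
      linear_combination c ^ 2 * hs - hsum))
  have hc : c = 0 := by simpa [hd, hv] using hsum
  simp [hc, hd]

end QuadraticForm

section ProjectivePlane

variable {L T : Submodule F (Fin 3 → F)} {P R : PGPoint F} {f : QuadraticForm F (Fin 3 → F)}
  {v w : Fin 3 → F}

theorem mk_mem_pointsOn (hv : v ≠ 0) : Projectivization.mk F v hv ∈ pointsOn L ↔ v ∈ L := by
  simp only [pointsOn, Set.mem_ofPred_eq, Projectivization.submodule_mk,
    Submodule.span_singleton_le_iff_mem]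

theorem mk_mem_conicSet (hv : v ≠ 0) : Projectivization.mk F v hv ∈ conicSet f ↔ f v = 0 := by
  simp only [conicSet, Set.mem_ofPred_eq, Projectivization.submodule_mk,
    Submodule.mem_span_singleton]
  constructor
  · exact fun h => h v ⟨1, one_smul F v⟩
  · rintro hfv _ ⟨c, rfl⟩
    rw [QuadraticMap.map_smul, hfv, smul_zero]

theorem IsProjLine.sup_submodule_eq (hL : IsProjLine F L) (hP : P ∈ pointsOn L)
    (hR : R ∈ pointsOn L) (hne : P ≠ R) : P.submodule ⊔ R.submodule = L := by
  have hdisj : P.submodule ⊓ R.submodule = ⊥ :=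
    ((Submodule.isAtom_iff_finrank_eq_one.2 P.finrank_submodule).disjoint_of_ne
      (Submodule.isAtom_iff_finrank_eq_one.2 R.finrank_submodule)
      (Projectivization.submodule_injective.ne hne)).eq_bot
  have hrank := Submodule.finrank_sup_add_finrank_inf_eq P.submodule R.submodule
  rw [hdisj, finrank_bot, P.finrank_submodule, R.finrank_submodule] at hrank
  exact Submodule.eq_of_le_of_finrank_eq (sup_le hP hR) (hrank.trans hL.symm)

theorem isExternalLine_conicSet_of_anisotropic (hL : IsProjLine F L)
    (h : (f.restrict L).Anisotropic) : IsExternalLine (conicSet f) L := by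
  refine ⟨hL, Set.eq_empty_iff_forall_notMem.2 ?_⟩
  rintro P ⟨hPC, hPL⟩
  induction P using Projectivization.ind with
  | h v hv =>
    rw [mk_mem_conicSet] at hPC
    rw [mk_mem_pointsOn] at hPL
    exact hv (congrArg Subtype.val (h ⟨v, hPL⟩ hPC))

-- Were `v` not polar to `w`, the line `vw` would meet the conic again at some `v + t • w`.
theorem IsTangentLine.polar_eq_zero (hT : IsTangentLine (conicSet f) T) (hv : v ∈ T)
    (hw : w ∈ T) (hfw : f w = 0) : QuadraticMap.polar f v w = 0 := by
  by_contra hpolar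
  obtain ⟨t, ht⟩ := exists_map_add_smul_eq_zero hfw hpolar
  have hw0 : w ≠ 0 := by
    rintro rfl
    exact hpolar (QuadraticMap.polar_zero_right f v)
  have hspan (c : F) : v ≠ c • w := by
    rintro rfl
    exact hpolar (by simp [hfw])
  have hvw : v + t • w ≠ 0 := fun h =>
    hspan (-t) (by rw [neg_smul]; exact eq_neg_of_add_eq_zero_left h)
  have heq : Projectivization.mk F (v + t • w) hvw = Projectivization.mk F w hw0 :=
    hT.2.unique
      ⟨(mk_mem_conicSet hvw).2 ht, (mk_mem_pointsOn hvw).2 (T.add_mem hv (T.smul_mem t hw))⟩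
      ⟨(mk_mem_conicSet hw0).2 hfw, (mk_mem_pointsOn hw0).2 hw⟩
  obtain ⟨c, hc⟩ := (Projectivization.mk_eq_mk_iff' F _ _ hvw hw0).1 heq
  exact hspan (c - t) (by rw [sub_smul, hc, add_sub_cancel_right])

end ProjectivePlane

/-- The quadratic form `Y² - XZ`, whose zero set is the conic `conicYsqXZ F`. -/
def conicForm (F : Type*) [Field F] : QuadraticForm F (Fin 3 → F) :=
  QuadraticMap.proj 1 1 - QuadraticMap.proj 0 2

section Conic

variable {a : F} {v w : Fin 3 → F} {L : Submodule F (Fin 3 → F)} {P R : PGPoint F}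

theorem conicForm_apply (v : Fin 3 → F) : conicForm F v = v 1 ^ 2 - v 0 * v 2 := by
  simp [conicForm, sq]

theorem polar_conicForm (v w : Fin 3 → F) :
    QuadraticMap.polar (conicForm F) v w = 2 * v 1 * w 1 - v 0 * w 2 - v 2 * w 0 := by
  simp only [QuadraticMap.polar, conicForm_apply, Pi.add_apply]
  ring

theorem conicYsqXZ_eq_conicSet : conicYsqXZ F = conicSet (conicForm F) := by
  simp only [conicYsqXZ, conicSet, conicForm_apply, sub_eq_zero]

theorem mem_lineZeqaX : v ∈ lineZeqaX a ↔ v 2 = a * v 0 := by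
  simp [lineZeqaX, sub_eq_zero]

theorem isSquare_conicForm_of_polar_eq_zero (hw : w ≠ 0) (hfw : conicForm F w = 0)
    (hpolar : QuadraticMap.polar (conicForm F) v w = 0) : IsSquare (conicForm F v) := by
  rw [conicForm_apply] at hfw ⊢
  rw [polar_conicForm] at hpolar
  by_cases h0 : w 0 = 0
  · have h1 : w 1 = 0 := by simpa [h0] using hfw
    have h2 : w 2 ≠ 0 := by
      contrapose! hw
      ext i
      fin_cases i <;> assumption
    have hv0 : v 0 = 0 := by simpa [h0, h1, h2] using hpolar
    simpa [hv0] using IsSquare.sq (v 1)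
  · exact isSquare_of_mul_sq_eq_sq (d := v 1 * w 0 - v 0 * w 1) h0 (by
      linear_combination -(v 0) ^ 2 * hfw + v 0 * w 0 * hpolar)

theorem isSquare_conicForm_of_isExteriorPoint (hv : v ≠ 0)
    (h : IsExteriorPoint (conicSet (conicForm F)) (Projectivization.mk F v hv)) :
    IsSquare (conicForm F v) := by
  obtain ⟨-, T, hT, hvT⟩ := h
  obtain ⟨R, ⟨hRC, hRT⟩, -⟩ := hT.2
  induction R using Projectivization.ind with
  | h w hw =>
    rw [mk_mem_conicSet] at hRC
    rw [mk_mem_pointsOn] at hvT hRT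
    exact isSquare_conicForm_of_polar_eq_zero hw hRC (hT.polar_eq_zero hvT hRT hRC)

theorem anisotropic_conicForm_restrict_lineZeqaX (ha : ¬ IsSquare a) :
    ((conicForm F).restrict (lineZeqaX a)).Anisotropic := by
  rintro ⟨v, hv⟩ hfv
  rw [QuadraticMap.restrict_apply, conicForm_apply] at hfv
  rw [mem_lineZeqaX] at hv
  have h0 : v 0 = 0 := by
    by_contra h0
    exact ha (isSquare_of_mul_sq_eq_sq (d := v 1) h0 (by linear_combination -hfv - v 0 * hv))
  have h1 : v 1 = 0 := by simpa [h0] using hfv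
  have h2 : v 2 = 0 := by simpa [h0] using hv
  ext i
  fin_cases i <;> assumption

theorem ptQ_notMem_pointsOn_lineZeqaX (htwo : (2 : F) ≠ 0) (ha : a ≠ 0) :
    ptQ F a ∉ pointsOn (lineZeqaX a) := by
  rw [ptQ, mk_mem_pointsOn, mem_lineZeqaX]
  simp only [Matrix.cons_val, mul_one]
  intro h
  exact mul_ne_zero htwo ha (by linear_combination -h)

theorem polar_conicForm_of_mem_lineZeqaX (hv : v ∈ lineZeqaX a) :
    QuadraticMap.polar (conicForm F) v ![1, 0, -a] = 0 := by
  simp [polar_conicForm, mem_lineZeqaX.1 hv, mul_comm]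

theorem isExternalLine_of_mem_lineZeqaX (ha : ¬ IsSquare a) (hL : IsProjLine F L)
    (hP : P ∈ pointsOn (lineZeqaX a)) (hR : R ∈ pointsOn (lineZeqaX a))
    (hPL : P ∈ pointsOn L) (hRL : R ∈ pointsOn L) (hne : P ≠ R) :
    IsExternalLine (conicSet (conicForm F)) L := by
  have hle : L ≤ lineZeqaX a := hL.sup_submodule_eq hPL hRL hne ▸ sup_le hP hR
  exact isExternalLine_conicSet_of_anisotropic hL
    (anisotropic_restrict_mono hle (anisotropic_conicForm_restrict_lineZeqaX ha))

theorem isExternalLine_of_isExteriorPoint_of_ptQ_mem (ha : ¬ IsSquare (-a))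
    (hL : IsProjLine F L) (hP : P ∈ pointsOn (lineZeqaX a))
    (hPext : IsExteriorPoint (conicSet (conicForm F)) P) (hPL : P ∈ pointsOn L)
    (hQL : ptQ F a ∈ pointsOn L) (hne : P ≠ ptQ F a) :
    IsExternalLine (conicSet (conicForm F)) L := by
  have hjoin := hL.sup_submodule_eq hPL hQL hne
  induction P using Projectivization.ind with
  | h v hv =>
    have hfv : conicForm F v ≠ 0 := mt (mk_mem_conicSet hv).2 hPext.1
    rw [mk_mem_pointsOn] at hP
    rw [ptQ, Projectivization.submodule_mk, Projectivization.submodule_mk,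
      ← Submodule.span_insert] at hjoin
    refine isExternalLine_conicSet_of_anisotropic hL (hjoin ▸ ?_)
    exact anisotropic_restrict_span_pair (polar_conicForm_of_mem_lineZeqaX hP) hfv
      (isSquare_conicForm_of_isExteriorPoint hv hPext) (by simpa [conicForm_apply] using ha)

end Conic

theorem stmt_14_general (htwo : (2 : F) ≠ 0) {a : F} (ha : ¬ IsSquare a)
    (ha_neg : ¬ IsSquare (-a)) :
    ptQ F a ∉ pointsOn (lineZeqaX a) ∧
      IsExteriorSet (conicYsqXZ F)
        ({P ∈ pointsOn (lineZeqaX a) | IsExteriorPoint (conicYsqXZ F) P} ∪ {ptQ F a}) := by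
  have ha0 : a ≠ 0 := by
    rintro rfl
    exact ha IsSquare.zero
  refine ⟨ptQ_notMem_pointsOn_lineZeqaX htwo ha0, ?_⟩
  rw [conicYsqXZ_eq_conicSet]
  rintro L hL ⟨P, ⟨⟨hP, hPext⟩ | rfl, hPL⟩, R, ⟨⟨hR, hRext⟩ | rfl, hRL⟩, hne⟩
  · exact isExternalLine_of_mem_lineZeqaX ha hL hP hR hPL hRL hne
  · exact isExternalLine_of_isExteriorPoint_of_ptQ_mem ha_neg hL hP hPext hPL hRL hne
  · exact isExternalLine_of_isExteriorPoint_of_ptQ_mem ha_neg hL hR hRext hRL hPL hne.symm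
  · exact absurd rfl hne

/-- `q ≡ 1 (mod 4)`, `a` a non-square; for the conic `Y² = XZ` and
the external line `L : Z = aX`, the point `Q₀ = ⟨(1,0,-a)⟩` does not lie on `L`
and the exterior points on `L` together with `Q₀` form an exterior set. -/
theorem stmt_14 [Fintype F] (hq : Fintype.card F % 4 = 1)
    (a : F) (ha : ¬ IsSquare a) :
    ptQ F a ∉ pointsOn (lineZeqaX a) ∧
      IsExteriorSet (conicYsqXZ F)
        ({P ∈ pointsOn (lineZeqaX a) | IsExteriorPoint (conicYsqXZ F) P} ∪ {ptQ F a}) := by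
  have hneg : IsSquare (-1 : F) := FiniteField.isSquare_neg_one_iff.2 (by omega)
  exact stmt_14_general (two_ne_zero_of_odd_card (Nat.odd_iff.2 (by omega))) ha
    (not_isSquare_neg_of_isSquare_neg_one hneg ha)
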